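/- arXiv:2201.08895 — 2 statements merged into one kernel-verified Lean document; each statement's English description precedes it below -/
import Mathlib

section
/- Sunflower collapse bound: let φ be a kCNF formula, let ψ ⊆ φ be a sunflower with core c, and let φ′ := (φ \ link_φ(c)) ∪ {c}, where link_φ(c) := {e ∈ φ : c ⊆ e}. Then σ(φ′) ≤ σ(φ) ≤ σ(φ′) + (1 − 2^{−k})^{|ψ|}. -/
/-!
The inequality `σ(φ') ≤ σ(φ)` is monotonicity: an assignment satisfying `c` satisfies every clause
of the link of `c`. For the upper bound, an assignment that satisfies `φ` but not `φ'` falsifies `c`,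
so it satisfies every reduced petal `e \ c`, `e ∈ ψ`. As the petals are valid clauses containing
`c`, the reduced petals share no variable with `c`, hence by the sunflower property none with each
other. They are therefore satisfied independently (`satProb_insert`), each with probability at most
`1 - 2^{-k}` because some assignment of its at most `k` variables falsifies it
(`satProb_singleton_le`); this gives `satProb_packing_le`.

The formulas involved have different variable sets. All satisfaction probabilities are compared over
one common set, which is harmless by `satProb_eq_uniformProb`.
-/

open Finset

open scoped Classical

/-- A literal is a propositional variable (a natural number) together with a sign. -/
abbrev PLit := ℕ × Bool

/-- A clause is a finite set of literals. -/
abbrev PClause := Finset PLit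

/-- A CNF formula is a finite set of clauses. -/
abbrev PCnf := Finset PClause

/-- A clause is valid if it contains no variable together with its negation. -/
def clauseValid (c : PClause) : Prop := ∀ v : ℕ, ¬((v, true) ∈ c ∧ (v, false) ∈ c)

/-- The variables occurring in a clause. -/
def clauseVars (c : PClause) : Finset ℕ := c.image Prod.fst

/-- A CNF formula is valid if all of its clauses are. -/
def cnfValid (φ : PCnf) : Prop := ∀ c ∈ φ, clauseValid c

/-- The variables occurring in a CNF formula. -/
def cnfVars (φ : PCnf) : Finset ℕ := φ.sup clauseVars

/-- `φ` is a `k`CNF formula: all clauses are valid and have at most `k` literals. -/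
def IsKCnf (k : ℕ) (φ : PCnf) : Prop := cnfValid φ ∧ ∀ c ∈ φ, c.card ≤ k

/-- An assignment is represented by the finite set `S` of variables set to true;
`litSat S l` says that the literal `l` is made true. -/
def litSat (S : Finset ℕ) (l : PLit) : Prop := if l.2 then l.1 ∈ S else l.1 ∉ S

/-- A clause is satisfied if it contains a literal made true. -/
def clauseSat (S : Finset ℕ) (c : PClause) : Prop := ∃ l ∈ c, litSat S l

/-- A CNF formula is satisfied if all of its clauses are. -/
def cnfSat (S : Finset ℕ) (φ : PCnf) : Prop := ∀ c ∈ φ, clauseSat S c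

/-- The satisfaction probability `σ(φ)`: the fraction of assignments
`β : vars(φ) → {0,1}` (represented as subsets of `cnfVars φ`) satisfying `φ`. -/
noncomputable def satProb (φ : PCnf) : ℝ :=
  ((cnfVars φ).powerset.filter (fun S => cnfSat S φ)).card / 2 ^ (cnfVars φ).card

/-- The set of satisfaction probabilities of `k`CNF formulas. -/
def kcnfSpectrum (k : ℕ) : Set ℝ := {x | ∃ φ : PCnf, IsKCnf k φ ∧ satProb φ = x}

/-- A packing: a set of pairwise variable-disjoint clauses. -/
def IsPacking (π : PCnf) : Prop :=
  ∀ c ∈ π, ∀ c' ∈ π, c ≠ c' → Disjoint (clauseVars c) (clauseVars c')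

/-- A sunflower with core `c`. -/
def IsSunflower (ψ : PCnf) (c : PClause) : Prop :=
  (∀ e ∈ ψ, c ⊆ e) ∧
    ∀ e ∈ ψ, ∀ e' ∈ ψ, e ≠ e' → clauseVars e ∩ clauseVars e' = clauseVars c

/-- The link of a clause `c` in `φ`: all superclauses of `c` in `φ`. -/
noncomputable def link (φ : PCnf) (c : PClause) : PCnf := φ.filter (fun e => c ⊆ e)

/-- The literal `l` is made true by the assignment `β : V → {0,1}` represented by `S ⊆ V`. -/
def litTrue (V S : Finset ℕ) (l : PLit) : Prop :=
  l.1 ∈ V ∧ (if l.2 then l.1 ∈ S else l.1 ∉ S)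

/-- The literal `l` is made false by the assignment `β : V → {0,1}` represented by `S ⊆ V`. -/
def litFalse (V S : Finset ℕ) (l : PLit) : Prop :=
  l.1 ∈ V ∧ ¬(if l.2 then l.1 ∈ S else l.1 ∉ S)

/-- The restriction `φ|_β` of `φ` to the assignment `β : V → {0,1}` represented by
`S ⊆ V`: remove every clause containing a literal made true by `β`, delete from the
remaining clauses all literals made false by `β`, and add the unit clause `{v}` for
each `v ∈ S` and the unit clause `{¬v}` for each `v ∈ V \ S`. -/
noncomputable def restrict (φ : PCnf) (V S : Finset ℕ) : PCnf :=
  ((φ.filter fun c => ¬ ∃ l ∈ c, litTrue V S l).image fun c =>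
      c.filter fun l => ¬ litFalse V S l)
    ∪ S.image (fun v => ({(v, true)} : PClause))
    ∪ (V \ S).image (fun v => ({(v, false)} : PClause))

/-! ### Uniformly random assignments -/

/-- The probability that a uniformly random subset of `V` has property `P`. -/
noncomputable def uniformProb (V : Finset ℕ) (P : Finset ℕ → Prop) : ℝ :=
  (V.powerset.filter P).card / 2 ^ V.card

theorem uniformProb_mono (V : Finset ℕ) (P Q : Finset ℕ → Prop)
    (h : ∀ S, P S → Q S) : uniformProb V P ≤ uniformProb V Q := by
  unfold uniformProb
  gcongr with S hS
  exact h _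

theorem uniformProb_or_le (V : Finset ℕ) (P Q : Finset ℕ → Prop) :
    uniformProb V (fun S => P S ∨ Q S) ≤ uniformProb V P + uniformProb V Q := by
  unfold uniformProb
  rw [← add_div]
  gcongr
  norm_cast
  refine le_trans (card_le_card fun S hS => ?_) (card_union_le _ _)
  simpa only [mem_union, mem_filter, ← and_or_left] using hS

theorem uniformProb_true (V : Finset ℕ) : uniformProb V (fun _ => True) = 1 := by
  simp [uniformProb]

/-- Events that depend on disjoint sets of variables are independent. -/
theorem uniformProb_union (A B : Finset ℕ) (hAB : Disjoint A B) (P Q : Finset ℕ → Prop)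
    (hP : ∀ S, P (S ∩ A) ↔ P S) (hQ : ∀ S, Q (S ∩ B) ↔ Q S) :
    uniformProb (A ∪ B) (fun S => P S ∧ Q S) = uniformProb A P * uniformProb B Q := by
  have key : ((A ∪ B).powerset.filter (fun S => P S ∧ Q S)).card
      = (A.powerset.filter P ×ˢ B.powerset.filter Q).card := by
    have hA : ∀ X ⊆ A, ∀ Y ⊆ B, (X ∪ Y) ∩ A = X := by
      intro X hX Y hY
      rw [union_inter_distrib_right, inter_eq_left.2 hX,
        disjoint_iff_inter_eq_empty.1 (hAB.symm.mono_left hY), union_empty]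
    have hB : ∀ X ⊆ A, ∀ Y ⊆ B, (X ∪ Y) ∩ B = Y := by
      intro X hX Y hY
      rw [union_inter_distrib_right, inter_eq_left.2 hY,
        disjoint_iff_inter_eq_empty.1 (hAB.mono_left hX), empty_union]
    refine card_nbij' (fun S => (S ∩ A, S ∩ B)) (fun p => p.1 ∪ p.2) ?_ ?_ ?_ ?_
    · intro S hS
      simp only [coe_filter, mem_powerset, Set.mem_ofPred_eq] at hS
      simp only [coe_product, coe_filter, mem_powerset, Set.mem_prod, Set.mem_ofPred_eq]
      exact ⟨⟨inter_subset_right, (hP S).2 hS.2.1⟩, inter_subset_right, (hQ S).2 hS.2.2⟩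
    · rintro ⟨X, Y⟩ h
      simp only [coe_product, coe_filter, mem_powerset, Set.mem_prod, Set.mem_ofPred_eq] at h
      obtain ⟨⟨hX, hPX⟩, hY, hQY⟩ := h
      simp only [coe_filter, mem_powerset, Set.mem_ofPred_eq]
      refine ⟨union_subset_union hX hY, ?_, ?_⟩
      · rwa [← hP, hA X hX Y hY]
      · rwa [← hQ, hB X hX Y hY]
    · intro S hS
      simp only [coe_filter, mem_powerset, Set.mem_ofPred_eq] at hS
      simp only
      rw [← inter_union_distrib_left, inter_eq_left.2 hS.1]
    · rintro ⟨X, Y⟩ h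
      simp only [coe_product, coe_filter, mem_powerset, Set.mem_prod, Set.mem_ofPred_eq] at h
      obtain ⟨⟨hX, -⟩, hY, -⟩ := h
      simp only [hA X hX Y hY, hB X hX Y hY]
  have hunion : uniformProb (A ∪ B) (fun S => P S ∧ Q S)
      = ((A.powerset.filter P ×ˢ B.powerset.filter Q).card : ℝ) / 2 ^ (A ∪ B).card := by
    rw [← key]
    unfold uniformProb
    congr!
  rw [hunion]
  unfold uniformProb
  rw [card_product, card_union_of_disjoint hAB, pow_add]
  push_cast
  rw [mul_div_mul_comm]

/-! ### Satisfaction probability over a larger variable set -/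

theorem clauseSat_inter {e : PClause} {A : Finset ℕ} (h : clauseVars e ⊆ A) (S : Finset ℕ) :
    clauseSat (S ∩ A) e ↔ clauseSat S e := by
  unfold clauseSat litSat
  refine exists_congr fun l => and_congr_right fun hl => ?_
  have : l.1 ∈ A := h (mem_image_of_mem _ hl)
  simp [this]

theorem clauseVars_subset_cnfVars {φ : PCnf} {e : PClause} (he : e ∈ φ) :
    clauseVars e ⊆ cnfVars φ := le_sup (f := clauseVars) he

theorem cnfSat_inter {φ : PCnf} {A : Finset ℕ} (h : cnfVars φ ⊆ A) (S : Finset ℕ) :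
    cnfSat (S ∩ A) φ ↔ cnfSat S φ :=
  forall₂_congr fun _ he => clauseSat_inter ((clauseVars_subset_cnfVars he).trans h) S

/-- The satisfaction probability does not change when irrelevant variables are added. -/
theorem satProb_eq_uniformProb {φ : PCnf} {V : Finset ℕ} (h : cnfVars φ ⊆ V) :
    satProb φ = uniformProb V (fun S => cnfSat S φ) := by
  have := uniformProb_union (cnfVars φ) (V \ cnfVars φ) disjoint_sdiff
    (fun S => cnfSat S φ) (fun _ => True) (cnfSat_inter subset_rfl) (fun _ => Iff.rfl)
  rw [union_sdiff_of_subset h, uniformProb_true, mul_one] at this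
  simp only [and_true] at this
  exact this.symm

theorem cnfVars_insert (e : PClause) (φ : PCnf) :
    cnfVars (insert e φ) = clauseVars e ∪ cnfVars φ := sup_insert

theorem cnfVars_singleton (e : PClause) : cnfVars {e} = clauseVars e := sup_singleton

/-! ### Packings -/

/-- A clause that shares no variable with `φ` is satisfied independently of `φ`. -/
theorem satProb_insert {e : PClause} {φ : PCnf} (h : Disjoint (clauseVars e) (cnfVars φ)) :
    satProb (insert e φ) = satProb {e} * satProb φ := by
  have := uniformProb_union (clauseVars e) (cnfVars φ) h
    (fun S => clauseSat S e) (fun S => cnfSat S φ)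
    (clauseSat_inter subset_rfl) (cnfSat_inter subset_rfl)
  rw [satProb_eq_uniformProb (cnfVars_insert e φ).subset,
    satProb_eq_uniformProb (cnfVars_singleton e).subset,
    satProb_eq_uniformProb (subset_refl (cnfVars φ))]
  simpa [cnfSat] using this

/-- At least one of the at most `2 ^ k` assignments to the variables of `e` falsifies it. -/
theorem satProb_singleton_le {k : ℕ} {e : PClause} (he : clauseValid e) (hk : e.card ≤ k) :
    satProb {e} ≤ 1 - (1 / 2 : ℝ) ^ k := by
  rw [satProb_eq_uniformProb (cnfVars_singleton e).subset]
  simp only [cnfSat, mem_singleton, forall_eq]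
  unfold uniformProb
  have hn : (clauseVars e).card ≤ k := card_image_le.trans hk
  set n := (clauseVars e).card with hndef
  -- The falsifying assignment sets to true exactly the variables that occur negated in `e`.
  have hlt : ((clauseVars e).powerset.filter (fun S => clauseSat S e)).card + 1 ≤ 2 ^ n := by
    rw [← card_powerset, Nat.succ_le_iff]
    refine card_lt_card (filter_ssubset.2
      ⟨(clauseVars e).filter (fun v => (v, false) ∈ e), by simp, ?_⟩)
    rintro ⟨⟨v, b⟩, hl, hs⟩
    have hv : v ∈ clauseVars e := mem_image_of_mem Prod.fst hl
    cases b
    · simp [litSat, hv, hl] at hs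
    · simp only [litSat, if_true, mem_filter] at hs
      exact he v ⟨hl, hs.2⟩
  have hlt' : (((clauseVars e).powerset.filter (fun S => clauseSat S e)).card : ℝ) + 1 ≤ 2 ^ n := by
    exact_mod_cast hlt
  have hpow : (1 / 2 : ℝ) ^ k ≤ (1 / 2 : ℝ) ^ n :=
    pow_le_pow_of_le_one (by norm_num) (by norm_num) hn
  have h2 : (1 / 2 : ℝ) ^ n * 2 ^ n = 1 := by rw [← mul_pow]; norm_num
  rw [div_le_iff₀ (by positivity)]
  have : (1 / 2 : ℝ) ^ k * 2 ^ n ≤ 1 :=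
    (mul_le_mul_of_nonneg_right hpow (by positivity)).trans_eq h2
  linarith

theorem satProb_nonneg (φ : PCnf) : 0 ≤ satProb φ := by unfold satProb; positivity

theorem satProb_packing_le {k : ℕ} {π : PCnf} (hπ : IsKCnf k π) (hp : IsPacking π) :
    satProb π ≤ (1 - (1 / 2 : ℝ) ^ k) ^ π.card := by
  induction π using Finset.induction_on with
  | empty => simp [satProb, cnfVars, cnfSat]
  | insert e π he ih =>
    have hdisj : Disjoint (clauseVars e) (cnfVars π) := by
      refine Finset.disjoint_sup_right.2 fun e' he' => ?_
      exact hp e (mem_insert_self _ _) e' (mem_insert_of_mem he') (by rintro rfl; exact he he')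
    rw [satProb_insert hdisj, card_insert_of_notMem he, pow_succ']
    have h1 := satProb_singleton_le (hπ.1 e (mem_insert_self _ _)) (hπ.2 e (mem_insert_self _ _))
    exact mul_le_mul h1
      (ih ⟨fun x hx => hπ.1 x (mem_insert_of_mem hx), fun x hx => hπ.2 x (mem_insert_of_mem hx)⟩
        fun x hx y hy => hp x (mem_insert_of_mem hx) y (mem_insert_of_mem hy))
      (satProb_nonneg _) ((satProb_nonneg _).trans h1)

/-! ### Reduced petals of a sunflower -/

theorem clauseVars_mono {c e : PClause} (h : c ⊆ e) : clauseVars c ⊆ clauseVars e :=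
  image_subset_image h

/-- A literal of `e` over a variable of `c` must lie in `c`, since otherwise `e` would contain both
that literal and its negation. -/
theorem disjoint_clauseVars_sdiff {c e : PClause} (he : clauseValid e) (hce : c ⊆ e) :
    Disjoint (clauseVars (e \ c)) (clauseVars c) := by
  rw [Finset.disjoint_left]
  intro v hv hv'
  simp only [clauseVars, mem_image, mem_sdiff, Prod.exists, exists_and_right, exists_eq_right]
    at hv hv'
  obtain ⟨b, hb, hbc⟩ := hv
  obtain ⟨b', hb'⟩ := hv'
  have hb'e := hce hb'
  cases b <;> cases b'
  · exact hbc hb'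
  · exact he v ⟨hb'e, hb⟩
  · exact he v ⟨hb, hb'e⟩
  · exact hbc hb'

/-- Two reduced petals could only share variables of the core, and they contain none of those. -/
theorem isPacking_image_sdiff {ψ : PCnf} {c : PClause} (hval : cnfValid ψ)
    (hsun : IsSunflower ψ c) : IsPacking (ψ.image (· \ c)) := by
  intro x hx y hy hxy
  obtain ⟨e, he, rfl⟩ := mem_image.1 hx
  obtain ⟨e', he', rfl⟩ := mem_image.1 hy
  have hne : e ≠ e' := by rintro rfl; exact hxy rfl
  rw [Finset.disjoint_left]
  intro v hv hv'
  have hvc : v ∈ clauseVars c := by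
    rw [← hsun.2 e he e' he' hne, mem_inter]
    exact ⟨clauseVars_mono sdiff_subset hv, clauseVars_mono sdiff_subset hv'⟩
  exact Finset.disjoint_left.1 (disjoint_clauseVars_sdiff (hval e he) (hsun.1 e he)) hv hvc

/-- Distinct petals stay distinct when the core is removed. -/
theorem card_image_sdiff {ψ : PCnf} {c : PClause} (h : ∀ e ∈ ψ, c ⊆ e) :
    (ψ.image (· \ c)).card = ψ.card := by
  refine card_image_of_injOn fun e he e' he' hee => ?_
  rw [← sdiff_union_of_subset (h e he), ← sdiff_union_of_subset (h e' he')]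
  exact congrArg (· ∪ c) hee

theorem clauseSat_mono {c e : PClause} (h : c ⊆ e) {S : Finset ℕ} (hS : clauseSat S c) :
    clauseSat S e := by
  obtain ⟨l, hl, hs⟩ := hS
  exact ⟨l, h hl, hs⟩

/-- **Sunflower collapse bound.** Collapsing the link of the core `c` of a
sunflower `ψ ⊆ φ` to the core lowers the satisfaction probability, and by at most
`(1 - 2^{-k})^{|ψ|}`. -/
theorem sunflower_collapse (k : ℕ) (φ ψ : PCnf) (c : PClause)
    (hφ : IsKCnf k φ) (hψ : ψ ⊆ φ) (hsun : IsSunflower ψ c) (hc : clauseValid c) :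
    satProb ((φ \ link φ c) ∪ {c}) ≤ satProb φ ∧
      satProb φ ≤ satProb ((φ \ link φ c) ∪ {c}) + (1 - (1 / 2 : ℝ) ^ k) ^ ψ.card := by
  set φ' : PCnf := (φ \ link φ c) ∪ {c} with hφ'
  set π : PCnf := ψ.image (· \ c) with hπ
  set V : Finset ℕ := cnfVars φ ∪ clauseVars c with hV
  have hVφ : cnfVars φ ⊆ V := subset_union_left
  have hVφ' : cnfVars φ' ⊆ V := by
    refine Finset.sup_le fun e he => ?_
    rcases mem_union.1 he with he | he
    · exact (clauseVars_subset_cnfVars (mem_sdiff.1 he).1).trans hVφ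
    · rw [mem_singleton.1 he]; exact subset_union_right
  have hVπ : cnfVars π ⊆ V := by
    refine Finset.sup_le fun x hx => ?_
    obtain ⟨e, he, rfl⟩ := mem_image.1 hx
    exact (clauseVars_mono sdiff_subset).trans ((clauseVars_subset_cnfVars (hψ he)).trans hVφ)
  have hval : cnfValid ψ := fun e he => hφ.1 e (hψ he)
  have hπk : IsKCnf k π := by
    refine ⟨fun x hx => ?_, fun x hx => ?_⟩ <;> obtain ⟨e, he, rfl⟩ := mem_image.1 hx
    · exact fun v hv => hval e he v ⟨(mem_sdiff.1 hv.1).1, (mem_sdiff.1 hv.2).1⟩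
    · exact (card_le_card sdiff_subset).trans (hφ.2 e (hψ he))
  constructor
  · rw [satProb_eq_uniformProb hVφ, satProb_eq_uniformProb hVφ']
    refine uniformProb_mono _ _ _ fun S hS e he => ?_
    by_cases hce : c ⊆ e
    · exact clauseSat_mono hce (hS c (by simp [hφ']))
    · exact hS e (by simp [hφ', link, he, hce])
  · have hbound : satProb π ≤ (1 - (1 / 2 : ℝ) ^ k) ^ ψ.card := by
      rw [← card_image_sdiff hsun.1]
      exact satProb_packing_le hπk (isPacking_image_sdiff hval hsun)
    refine le_trans ?_ (add_le_add_right hbound _)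
    rw [satProb_eq_uniformProb hVφ, satProb_eq_uniformProb hVφ', satProb_eq_uniformProb hVπ]
    refine le_trans (uniformProb_mono _ _ _ fun S hS => ?_) (uniformProb_or_le _ _ _)
    by_cases hSc : clauseSat S c
    · left
      intro e he
      rcases mem_union.1 he with he | he
      · exact hS e (mem_sdiff.1 he).1
      · rwa [mem_singleton.1 he]
    · right
      intro x hx
      obtain ⟨e, he, rfl⟩ := mem_image.1 hx
      obtain ⟨l, hl, hs⟩ := hS e (hψ he)
      exact ⟨l, mem_sdiff.2 ⟨hl, fun hlc => hSc ⟨l, hlc, hs⟩⟩, hs⟩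
end

section
/- Backdoor Lemma: let 1 ≤ l ≤ k, let φ be a kCNF formula, let κ be any CNF formula, and define ω := {c ∈ κ : |c| < k−l} ∪ ⋃_{c ∈ κ, |c| ≥ k−l} link_φ(c), where link_φ(c) := {e ∈ φ : c ⊆ e}. Then for every assignment β : vars(κ) → {0,1}, the restriction ω|_β is an lCNF formula, i.e., every clause of ω|_β has at most l literals (so vars(κ) is a strong backdoor set for ω into lCNF formulas). -/
/-!
A literal over the assigned variables `V` is made either true or false, so a clause surviving the
restriction keeps only its literals over variables outside `V`. Every clause of `ω` contains some
clause `c ∈ κ`, and all variables of `c` lie in `V = vars(κ)`, so at least the `|c|` literals of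
`c` are deleted. A clause of `κ` itself therefore shrinks to the empty clause, and a clause
`e ∈ link_φ(c)` with `|c| ≥ k - l` shrinks to at most `|e| - |c| ≤ k - (k - l) = l` literals.
The unit clauses that record the assignment have one literal, and `1 ≤ l`.
-/

open Finset

open scoped Classical

/-- A clause `e` without true literals loses all literals of any subclause `c` over `V`. -/
lemma card_filter_not_litFalse_add_card_le {V S : Finset ℕ} {c e : PClause} (hce : c ⊆ e)
    (hcV : clauseVars c ⊆ V) (he : ¬ ∃ x ∈ e, litTrue V S x) :
    (e.filter fun x => ¬ litFalse V S x).card + c.card ≤ e.card := by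
  have hdisj : Disjoint (e.filter fun x => ¬ litFalse V S x) c := by
    rw [Finset.disjoint_left]
    intro x hx hxc
    obtain ⟨hxe, hnf⟩ := Finset.mem_filter.mp hx
    have hxV : x.1 ∈ V := hcV (Finset.mem_image_of_mem _ hxc)
    exact hnf ⟨hxV, fun ht => he ⟨x, hxe, hxV, ht⟩⟩
  rw [← Finset.card_union_of_disjoint hdisj]
  exact Finset.card_le_card (Finset.union_subset (Finset.filter_subset _ _) hce)

lemma clauseValid_of_subset {c e : PClause} (hce : c ⊆ e) (he : clauseValid e) : clauseValid c :=
  fun v h => he v ⟨hce h.1, hce h.2⟩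

lemma clauseValid_singleton (x : PLit) : clauseValid {x} := by
  rintro v ⟨h₁, h₂⟩
  rw [Finset.mem_singleton] at h₁ h₂
  simpa using h₁.trans h₂.symm

lemma clauseVars_subset_cnfVars_s18 {κ : PCnf} {c : PClause} (hc : c ∈ κ) :
    clauseVars c ⊆ cnfVars κ :=
  Finset.le_sup (f := clauseVars) hc

/-- The restriction of a valid formula `ψ` is an `l`CNF formula once every clause of `ψ` has at
most `l` literals more than some subclause of it over `V`. -/
lemma isKCnf_restrict {l : ℕ} (hl : 1 ≤ l) {ψ : PCnf} {V : Finset ℕ} (S : Finset ℕ)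
    (hψ : cnfValid ψ)
    (hsub : ∀ e ∈ ψ, ∃ c ⊆ e, clauseVars c ⊆ V ∧ e.card ≤ l + c.card) :
    IsKCnf l (restrict ψ V S) := by
  suffices h : ∀ d ∈ restrict ψ V S, clauseValid d ∧ d.card ≤ l from
    ⟨fun d hd => (h d hd).1, fun d hd => (h d hd).2⟩
  intro d hd
  simp only [_root_.restrict, Finset.mem_union, Finset.mem_image] at hd
  rcases hd with (⟨e, he, rfl⟩ | ⟨v, -, rfl⟩) | ⟨v, -, rfl⟩
  · obtain ⟨heψ, hns⟩ := Finset.mem_filter.mp he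
    obtain ⟨c, hce, hcV, hcard⟩ := hsub e heψ
    have := card_filter_not_litFalse_add_card_le hce hcV hns
    exact ⟨clauseValid_of_subset (Finset.filter_subset _ _) (hψ e heψ), by omega⟩
  · exact ⟨clauseValid_singleton _, by simpa using hl⟩
  · exact ⟨clauseValid_singleton _, by simpa using hl⟩

/-- **Backdoor Lemma.** Let `1 ≤ l ≤ k`, let `φ` be a `k`CNF formula, let `κ` be
any CNF formula, and let `ω` consist of the clauses of `κ` of size `< k - l`
together with the links in `φ` of the clauses of `κ` of size `≥ k - l`. Then for
every assignment `β : vars(κ) → {0,1}`, the restriction `ω|_β` is an `l`CNF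
formula, i.e. `vars(κ)` is a strong backdoor set for `ω` into `l`CNF formulas. -/
theorem backdoor_lemma (k l : ℕ) (hl : 1 ≤ l) (hlk : l ≤ k)
    (φ κ : PCnf) (hφ : IsKCnf k φ) (hκ : cnfValid κ) :
    ∀ S ⊆ cnfVars κ,
      IsKCnf l (restrict
        ((κ.filter fun c => c.card < k - l) ∪
          (κ.filter fun c => k - l ≤ c.card).biUnion (fun c => link φ c))
        (cnfVars κ) S) := by
  intro S _
  have hω : ∀ e ∈ (κ.filter fun c => c.card < k - l) ∪
      (κ.filter fun c => k - l ≤ c.card).biUnion (fun c => link φ c),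
      e ∈ κ ∨ e ∈ φ ∧ ∃ c ∈ κ, k - l ≤ c.card ∧ c ⊆ e := by
    intro e he
    simp only [Finset.mem_union, Finset.mem_biUnion, Finset.mem_filter, link] at he
    rcases he with ⟨heκ, -⟩ | ⟨c, ⟨hcκ, hc⟩, heφ, hce⟩
    · exact Or.inl heκ
    · exact Or.inr ⟨heφ, c, hcκ, hc, hce⟩
  refine isKCnf_restrict hl S (fun e he => ?_) (fun e he => ?_)
  · rcases hω e he with heκ | ⟨heφ, -⟩
    · exact hκ e heκ
    · exact hφ.1 e heφ
  · rcases hω e he with heκ | ⟨heφ, c, hcκ, hc, hce⟩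
    · exact ⟨e, Finset.Subset.refl e, clauseVars_subset_cnfVars_s18 heκ, Nat.le_add_left _ _⟩
    · have := hφ.2 e heφ
      exact ⟨c, hce, clauseVars_subset_cnfVars_s18 hcκ, by omega⟩
end
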